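/- Let μ be the standard Gaussian measure on ℝⁿ (the Borel measure with density (2π)^{-n/2} e^{-|x|²/2} with respect to Lebesgue measure). Let f : ℝⁿ → ℝⁿ be a continuously differentiable map such that x ↦ |f(x)|² and x ↦ ‖Jf(x)‖₂² are integrable with respect to μ, where Jf(x) denotes the Jacobian matrix of f at x and ‖·‖₂ the Hilbert–Schmidt (Frobenius) norm. Then ∫_{ℝⁿ} (f(x)·x − Tr(Jf(x)))² dμ(x) ≤ ∫_{ℝⁿ} (|f(x)|² + ‖Jf(x)‖₂²) dμ(x), where Tr(Jf(x)) is the trace of the Jacobian of f at x (i.e. the divergence of f). -/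

import Mathlib

open MeasureTheory Real
open scoped RealInnerProductSpace

open Filter Topology ContDiff

namespace Ramer

variable {n : ℕ}

noncomputable def rho (n : ℕ) (x : EuclideanSpace ℝ (Fin n)) : ℝ :=
  (2 * π) ^ (-(n : ℝ) / 2) * Real.exp (-‖x‖ ^ 2 / 2)

lemma rho_pos (x : EuclideanSpace ℝ (Fin n)) : 0 < rho n x := by
  unfold rho; positivity

lemma rho_contDiff : ContDiff ℝ ∞ (rho n) := by
  unfold rho
  have : ContDiff ℝ ∞ (fun x : EuclideanSpace ℝ (Fin n) => ‖x‖ ^ 2) := contDiff_norm_sq ℝ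
  fun_prop

lemma rho_fderiv (x : EuclideanSpace ℝ (Fin n)) (i : Fin n) :
    fderiv ℝ (rho n) x (EuclideanSpace.single i (1 : ℝ)) = - (x i * rho n x) := by
  have h1 : HasFDerivAt (fun x : EuclideanSpace ℝ (Fin n) => ‖x‖ ^ 2)
      (2 • (innerSL ℝ x)) x := (hasStrictFDerivAt_norm_sq x).hasFDerivAt
  have h2 : HasFDerivAt (fun x : EuclideanSpace ℝ (Fin n) => -‖x‖ ^ 2 / 2)
      ((-(1/2) : ℝ) • (2 • (innerSL ℝ x))) x := by
    refine (h1.const_mul (-(1/2) : ℝ)).congr_of_eventuallyEq (Eventually.of_forall fun y => ?_)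
    simp only []; ring
  have h3 := (h2.exp).const_mul ((2 * π) ^ (-(n : ℝ) / 2))
  have h4 : fderiv ℝ (rho n) x = _ := h3.fderiv
  rw [h4]
  simp [rho, EuclideanSpace.inner_single_right]
  ring

lemma rho_integrable : Integrable (rho n) := by
  have h := GaussianFourier.integrable_cexp_neg_mul_sq_norm_add (V := EuclideanSpace ℝ (Fin n))
    (b := (1/2 : ℂ)) (by norm_num) 0 0
  have h' := h.re.const_mul ((2 * π) ^ (-(n : ℝ) / 2))
  refine h'.congr (Eventually.of_forall fun x => ?_)
  simp only [rho]
  congr 1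
  have : (-(1/2 : ℂ) * (‖x‖ : ℂ) ^ 2 + 0 * ((⟪(0 : EuclideanSpace ℝ (Fin n)), x⟫ : ℝ) : ℂ)) = ((-‖x‖ ^ 2 / 2 : ℝ) : ℂ) := by
    push_cast; ring
  erw [this]
  rw [← Complex.ofReal_exp]
  exact Complex.ofReal_re _

noncomputable def gam (n : ℕ) : Measure (EuclideanSpace ℝ (Fin n)) :=
  volume.withDensity (fun x => ENNReal.ofReal (rho n x))

instance : IsFiniteMeasure (gam n) :=
  isFiniteMeasure_withDensity_ofReal rho_integrable.2

lemma integral_gam (g : EuclideanSpace ℝ (Fin n) → ℝ) :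
    ∫ x, g x ∂(gam n) = ∫ x, g x * rho n x := by
  unfold gam
  rw [integral_withDensity_eq_integral_toReal_smul]
  · refine integral_congr_ae (Eventually.of_forall fun x => ?_)
    simp [ENNReal.toReal_ofReal (rho_pos x).le, mul_comm]
  · exact rho_contDiff.continuous.measurable.ennreal_ofReal
  · simp

lemma cc_int {μ : Measure (EuclideanSpace ℝ (Fin n))} [IsFiniteMeasureOnCompacts μ]
    {g : EuclideanSpace ℝ (Fin n) → ℝ} (h1 : Continuous g) (h2 : HasCompactSupport g) :
    Integrable g μ := h1.integrable_of_hasCompactSupport h2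

lemma cs_fderiv {u : EuclideanSpace ℝ (Fin n) → ℝ} (hu : HasCompactSupport u)
    (v : EuclideanSpace ℝ (Fin n)) : HasCompactSupport (fun x => fderiv ℝ u x v) :=
  (hu.fderiv ℝ).comp_left (g := fun L : EuclideanSpace ℝ (Fin n) →L[ℝ] ℝ => L v) (by simp)

lemma ibp {u v : EuclideanSpace ℝ (Fin n) → ℝ} (hu : ContDiff ℝ 1 u) (hv : ContDiff ℝ 1 v)
    (cu : HasCompactSupport u) (i : Fin n) :
    ∫ x, (x i * u x - fderiv ℝ u x (EuclideanSpace.single i (1 : ℝ))) * v x ∂(gam n)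
      = ∫ x, u x * fderiv ℝ v x (EuclideanSpace.single i (1 : ℝ)) ∂(gam n) := by
  rw [integral_gam, integral_gam]
  set e := EuclideanSpace.single i (1 : ℝ)
  have hr : ContDiff ℝ 1 (rho n) := rho_contDiff.of_le (by simp)
  have hvr : ContDiff ℝ 1 (fun x => v x * rho n x) := hv.mul hr
  have du : Continuous (fun x => fderiv ℝ u x e) := (hu.continuous_fderiv_apply one_ne_zero).comp (by fun_prop : Continuous fun x => (x, e))
  have dv : Continuous (fun x => fderiv ℝ v x e) := (hv.continuous_fderiv_apply one_ne_zero).comp (by fun_prop : Continuous fun x => (x, e))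
  have dvr : Continuous (fun x => fderiv ℝ (fun x => v x * rho n x) x e) := (hvr.continuous_fderiv_apply one_ne_zero).comp (by fun_prop : Continuous fun x => (x, e))
  have cu' : HasCompactSupport (fun x => fderiv ℝ u x e) := cs_fderiv cu e
  have cont_u := hu.continuous
  have cont_v := hv.continuous
  have cont_r := hr.continuous
  have key := integral_mul_fderiv_eq_neg_fderiv_mul_of_integrable (μ := (volume : Measure (EuclideanSpace ℝ (Fin n))))
    (f := u) (g := fun x => v x * rho n x) (v := e)
    (cc_int (by fun_prop) cu'.mul_right) (cc_int (by fun_prop) cu.mul_right)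
    (cc_int (by fun_prop) cu.mul_right)
    (fun x _ => hu.differentiable one_ne_zero x) (fun x _ => hvr.differentiable one_ne_zero x)
  have e1 : ∀ x, fderiv ℝ (fun x => v x * rho n x) x e = v x * -(x i * rho n x) + rho n x * fderiv ℝ v x e := by
    intro x
    rw [fderiv_fun_mul (hv.differentiable one_ne_zero x) (hr.differentiable one_ne_zero x)]
    simp [e, rho_fderiv]
  simp only [e1] at key
  have i1 : Integrable (fun x => (x i * u x - fderiv ℝ u x e) * v x * rho n x) := by
    refine cc_int (by fun_prop) ?_
    exact ((cu.mul_left.sub cu').mul_right).mul_right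
  have i2 : Integrable (fun x => fderiv ℝ u x e * (v x * rho n x)) :=
    cc_int (by fun_prop) cu'.mul_right
  have i3 : Integrable (fun x => u x * fderiv ℝ v x e * rho n x) :=
    cc_int (by fun_prop) cu.mul_right.mul_right
  have i4 : Integrable (fun x => u x * (v x * -(x i * rho n x) + rho n x * fderiv ℝ v x e)) :=
    cc_int (by fun_prop) cu.mul_right
  rw [eq_comm, ← sub_eq_zero, ← integral_sub i3 i1]
  rw [← add_eq_zero_iff_eq_neg, ← integral_add i4 i2] at key
  rw [← key]
  congr 1; ext x; ring

lemma pair {u v : EuclideanSpace ℝ (Fin n) → ℝ} (hu : ContDiff ℝ 2 u) (hv : ContDiff ℝ 2 v)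
    (cu : HasCompactSupport u) (cv : HasCompactSupport v) (i j : Fin n) :
    ∫ x, (x i * u x - fderiv ℝ u x (EuclideanSpace.single i (1 : ℝ))) *
        (x j * v x - fderiv ℝ v x (EuclideanSpace.single j (1 : ℝ))) ∂(gam n)
      = ∫ x, (if i = j then u x * v x else 0) ∂(gam n) +
        ∫ x, fderiv ℝ u x (EuclideanSpace.single j (1 : ℝ)) *
          fderiv ℝ v x (EuclideanSpace.single i (1 : ℝ)) ∂(gam n) := by
  set ei := EuclideanSpace.single i (1 : ℝ) with hei
  set ej := EuclideanSpace.single j (1 : ℝ) with hej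
  have hv' : ContDiff ℝ 1 (fderiv ℝ v) := hv.fderiv_right (by norm_num)
  have hvj : ContDiff ℝ 1 (fun x => fderiv ℝ v x ej) := hv'.clm_apply contDiff_const
  have hvi : ContDiff ℝ 1 (fun x => fderiv ℝ v x ei) := hv'.clm_apply contDiff_const
  have hu1 : ContDiff ℝ 1 u := hu.of_le (by norm_num)
  have hv1 : ContDiff ℝ 1 v := hv.of_le (by norm_num)
  have hcoord : ContDiff ℝ 1 (fun x : EuclideanSpace ℝ (Fin n) => x j) := by fun_prop
  have hw : ContDiff ℝ 1 (fun x => x j * v x - fderiv ℝ v x ej) := (hcoord.mul hv1).sub hvj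
  rw [ibp hu1 hw cu i]
  have e1 : ∀ x, u x * fderiv ℝ (fun x => x j * v x - fderiv ℝ v x ej) x ei =
      (if i = j then u x * v x else 0) +
      (x j * fderiv ℝ v x ei - fderiv ℝ (fun x => fderiv ℝ v x ei) x ej) * u x := by
    intro x
    have d1 := hv'.differentiable one_ne_zero x
    have dc : HasFDerivAt (fun x : EuclideanSpace ℝ (Fin n) => x j)
      (EuclideanSpace.proj j : EuclideanSpace ℝ (Fin n) →L[ℝ] ℝ) x :=
      (EuclideanSpace.proj j : EuclideanSpace ℝ (Fin n) →L[ℝ] ℝ).hasFDerivAt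
    have sym : fderiv ℝ (fderiv ℝ v) x ei ej = fderiv ℝ (fderiv ℝ v) x ej ei :=
      (hv.contDiffAt.isSymmSndFDerivAt (by simp)).eq ei ej
    rw [fderiv_fun_sub ((hcoord.mul hv1).differentiable one_ne_zero x) (hvj.differentiable one_ne_zero x),
      fderiv_fun_mul (hcoord.differentiable one_ne_zero x) (hv1.differentiable one_ne_zero x),
      fderiv_clm_apply d1 (by fun_prop), fderiv_clm_apply d1 (by fun_prop), dc.fderiv]
    simp [sym]
    by_cases h : i = j
    · subst h; simp [hei]; ring
    · simp [hei, h, Ne.symm h]; ring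
  have e2 : ∀ w x, fderiv ℝ u x ej * w = w * fderiv ℝ u x ej := fun w x => mul_comm _ _
  rw [← hei]
  simp only [e1, e2]
  rw [integral_add, ibp hvi hu1 (cs_fderiv cv ei) j]
  · by_cases h : i = j
    · simp only [h, if_true]
      exact cc_int (hu.continuous.mul hv.continuous) cu.mul_right
    · simp [h]
  · refine cc_int ?_ cu.mul_left
    have : Continuous (fun x => fderiv ℝ (fun x => fderiv ℝ v x ei) x ej) :=
      (hvi.continuous_fderiv_apply one_ne_zero).comp (by fun_prop : Continuous fun x => (x, ej))
    have := hvi.continuous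
    have := hu.continuous
    fun_prop

/-- the divergence -/
noncomputable def DD (f : EuclideanSpace ℝ (Fin n) → EuclideanSpace ℝ (Fin n))
    (x : EuclideanSpace ℝ (Fin n)) : ℝ :=
  ⟪f x, x⟫ - ∑ i : Fin n, fderiv ℝ f x (EuclideanSpace.single i (1 : ℝ)) i

/-- the right-hand side -/
noncomputable def RR (f : EuclideanSpace ℝ (Fin n) → EuclideanSpace ℝ (Fin n))
    (x : EuclideanSpace ℝ (Fin n)) : ℝ :=
  ‖f x‖ ^ 2 + ∑ i : Fin n, ∑ j : Fin n,
          (fderiv ℝ f x (EuclideanSpace.single j (1 : ℝ)) i) ^ 2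

lemma RR_nonneg (f : EuclideanSpace ℝ (Fin n) → EuclideanSpace ℝ (Fin n)) (x) : 0 ≤ RR f x := by
  unfold RR; positivity

/-- the inequality, with a lower integral on the left -/
def PP (f : EuclideanSpace ℝ (Fin n) → EuclideanSpace ℝ (Fin n)) : Prop :=
  ∫⁻ x, ENNReal.ofReal (DD f x ^ 2) ∂(gam n) ≤ ENNReal.ofReal (∫ x, RR f x ∂(gam n))

lemma cont_entry {f : EuclideanSpace ℝ (Fin n) → EuclideanSpace ℝ (Fin n)} (hf : ContDiff ℝ 1 f)
    (i j : Fin n) : Continuous (fun x => fderiv ℝ f x (EuclideanSpace.single j (1 : ℝ)) i) := by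
  have : Continuous (fun x => fderiv ℝ f x (EuclideanSpace.single j (1 : ℝ))) :=
    (hf.continuous_fderiv_apply one_ne_zero).comp
      (by fun_prop : Continuous fun x => (x, EuclideanSpace.single j (1 : ℝ)))
  fun_prop

lemma cont_DD {f : EuclideanSpace ℝ (Fin n) → EuclideanSpace ℝ (Fin n)} (hf : ContDiff ℝ 1 f) :
    Continuous (DD f) := by
  have := fun i j => cont_entry hf i j
  have := hf.continuous
  unfold DD
  fun_prop

lemma cont_RR {f : EuclideanSpace ℝ (Fin n) → EuclideanSpace ℝ (Fin n)} (hf : ContDiff ℝ 1 f) :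
    Continuous (RR f) := by
  have := fun i j => cont_entry hf i j
  have := hf.continuous
  unfold RR
  fun_prop

lemma entry_eq {f : EuclideanSpace ℝ (Fin n) → EuclideanSpace ℝ (Fin n)} (hf : ContDiff ℝ 1 f)
    (i : Fin n) (x v : EuclideanSpace ℝ (Fin n)) :
    fderiv ℝ f x v i = fderiv ℝ (fun y => f y i) x v := by
  have h := (hf.differentiable one_ne_zero x).hasFDerivAt
  have := (EuclideanSpace.proj i : EuclideanSpace ℝ (Fin n) →L[ℝ] ℝ).hasFDerivAt.comp x h
  have h2 : fderiv ℝ (fun y => f y i) x = _ := this.fderiv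
  rw [h2]; rfl

lemma PP_smooth {f : EuclideanSpace ℝ (Fin n) → EuclideanSpace ℝ (Fin n)} (hf : ContDiff ℝ 2 f)
    (cf : HasCompactSupport f) : PP f := by
  have hf1 : ContDiff ℝ 1 f := hf.of_le (by norm_num)
  have hg : ∀ i, ContDiff ℝ 2 (fun x => f x i) := fun i => by fun_prop
  have cg : ∀ i, HasCompactSupport (fun x => f x i) := fun i =>
    cf.comp_left (g := fun y : EuclideanSpace ℝ (Fin n) => y i) rfl
  have ce : ∀ i j, HasCompactSupport (fun x => fderiv ℝ f x (EuclideanSpace.single j (1 : ℝ)) i) := by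
    intro i j
    simp only [entry_eq hf1]
    exact cs_fderiv (cg i) _
  have cont := fun i j => cont_entry hf1 i j
  have contg := fun i => (hg i).continuous
  have hDD : ∀ x, DD f x = ∑ i, (x i * f x i - fderiv ℝ f x (EuclideanSpace.single i (1 : ℝ)) i) := by
    intro x
    simp [DD, PiLp.inner_apply, Finset.sum_sub_distrib]
  have ct : ∀ i, HasCompactSupport
      (fun x => (x i * f x i - fderiv ℝ f x (EuclideanSpace.single i (1 : ℝ)) i)) :=
    fun i => (cg i).mul_left.sub (ce i i)
  have cct : ∀ i, Continuous
      (fun x => (x i * f x i - fderiv ℝ f x (EuclideanSpace.single i (1 : ℝ)) i)) :=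
    fun i => by fun_prop
  have hint : ∀ i j, Integrable (fun x => (x i * f x i - fderiv ℝ f x (EuclideanSpace.single i (1 : ℝ)) i) *
      (x j * f x j - fderiv ℝ f x (EuclideanSpace.single j (1 : ℝ)) j)) (gam n) :=
    fun i j => cc_int ((cct i).mul (cct j)) (ct i).mul_right
  have hsq : ∀ x, DD f x ^ 2 = ∑ i, ∑ j, (x i * f x i - fderiv ℝ f x (EuclideanSpace.single i (1 : ℝ)) i) *
      (x j * f x j - fderiv ℝ f x (EuclideanSpace.single j (1 : ℝ)) j) := by
    intro x
    rw [hDD, sq, Finset.sum_mul_sum]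
  have iA : ∀ i j, Integrable (fun x => if i = j then f x i * f x j else 0) (gam n) := by
    intro i j
    by_cases h : i = j
    · simp only [h, if_true]
      exact cc_int ((contg j).mul (contg j)) (cg j).mul_right
    · simp [h]
  have iB : ∀ i j, Integrable (fun x => fderiv ℝ f x (EuclideanSpace.single j (1 : ℝ)) i *
      fderiv ℝ f x (EuclideanSpace.single i (1 : ℝ)) j) (gam n) :=
    fun i j => cc_int ((cont i j).mul (cont j i)) (ce i j).mul_right
  have iAB : ∀ i j, Integrable (fun x => (if i = j then f x i * f x j else 0) +
      fderiv ℝ f x (EuclideanSpace.single j (1 : ℝ)) i *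
      fderiv ℝ f x (EuclideanSpace.single i (1 : ℝ)) j) (gam n) := fun i j => (iA i j).add (iB i j)
  have iD : Integrable (fun x => DD f x ^ 2) (gam n) := by
    simp only [hsq]
    exact integrable_finsetSum _ fun i _ => integrable_finsetSum _ fun j _ => hint i j
  have cR : HasCompactSupport (fun x => ∑ i : Fin n, ∑ j : Fin n,
          (fderiv ℝ f x (EuclideanSpace.single j (1 : ℝ)) i) ^ 2) :=
    (cf.fderiv ℝ).comp_left (g := fun L : EuclideanSpace ℝ (Fin n) →L[ℝ] EuclideanSpace ℝ (Fin n) =>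
      ∑ i : Fin n, ∑ j : Fin n, (L (EuclideanSpace.single j (1 : ℝ)) i) ^ 2) (by simp)
  have iR : Integrable (RR f) (gam n) := by
    refine cc_int (cont_RR hf1) ?_
    have : HasCompactSupport (fun x => ‖f x‖ ^ 2) :=
      cf.comp_left (g := fun y : EuclideanSpace ℝ (Fin n) => ‖y‖ ^ 2) (by simp)
    exact this.add cR
  have main : ∫ x, DD f x ^ 2 ∂(gam n) = ∫ x, ∑ i, ∑ j, ((if i = j then f x i * f x j else 0) +
      fderiv ℝ f x (EuclideanSpace.single j (1 : ℝ)) i *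
      fderiv ℝ f x (EuclideanSpace.single i (1 : ℝ)) j) ∂(gam n) := by
    simp only [hsq]
    rw [integral_finsetSum _ fun i _ => integrable_finsetSum _ fun j _ => hint i j,
      integral_finsetSum _ fun i _ => integrable_finsetSum _ fun j _ => iAB i j]
    refine Finset.sum_congr rfl fun i _ => ?_
    rw [integral_finsetSum _ fun j _ => hint i j,
      integral_finsetSum _ fun j _ => iAB i j]
    refine Finset.sum_congr rfl fun j _ => ?_
    rw [integral_add (iA i j) (iB i j)]
    simp only [entry_eq hf1]
    exact pair (hg i) (hg j) (cg i) (cg j) i j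
  unfold PP
  rw [← ofReal_integral_eq_lintegral_ofReal iD (Eventually.of_forall fun x => sq_nonneg _)]
  apply ENNReal.ofReal_le_ofReal
  rw [main]
  refine integral_mono (integrable_finsetSum _ fun i _ => integrable_finsetSum _ fun j _ =>
    iAB i j) iR fun x => ?_
  simp only [Finset.sum_add_distrib, RR]
  gcongr ?_ + ?_
  · rw [EuclideanSpace.norm_sq_eq]
    simp [sq]
  · set a : Fin n → Fin n → ℝ := fun i j => fderiv ℝ f x (EuclideanSpace.single j (1 : ℝ)) i
    change ∑ i, ∑ j, a i j * a j i ≤ ∑ i, ∑ j, a i j ^ 2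
    have h1 : ∑ i, ∑ j, a j i ^ 2 = ∑ i, ∑ j, a i j ^ 2 := Finset.sum_comm
    have h2 : ∑ i, ∑ j, a i j * a j i ≤ ∑ i, ∑ j, (a i j ^ 2 + a j i ^ 2) / 2 := by
      gcongr with i _ j _
      nlinarith [sq_nonneg (a i j - a j i)]
    simp only [← Finset.sum_div, Finset.sum_add_distrib, h1] at h2
    linarith

lemma PP_lim {f : EuclideanSpace ℝ (Fin n) → EuclideanSpace ℝ (Fin n)}
    {F : ℕ → EuclideanSpace ℝ (Fin n) → EuclideanSpace ℝ (Fin n)}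
    (hF : ∀ k, ContDiff ℝ 1 (F k)) (hP : ∀ k, PP (F k))
    (h0 : ∀ x, Tendsto (fun k => F k x) atTop (𝓝 (f x)))
    (h1 : ∀ x, Tendsto (fun k => fderiv ℝ (F k) x) atTop (𝓝 (fderiv ℝ f x)))
    {B : EuclideanSpace ℝ (Fin n) → ℝ} (hB : Integrable B (gam n))
    (hRB : ∀ k x, RR (F k) x ≤ B x) : PP f := by
  have he : ∀ i j x, Tendsto (fun k => fderiv ℝ (F k) x (EuclideanSpace.single j (1 : ℝ)) i) atTop
      (𝓝 (fderiv ℝ f x (EuclideanSpace.single j (1 : ℝ)) i)) := by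
    intro i j x
    have hc : Continuous (fun L : EuclideanSpace ℝ (Fin n) →L[ℝ] EuclideanSpace ℝ (Fin n) =>
      L (EuclideanSpace.single j (1 : ℝ)) i) := by fun_prop
    exact (hc.tendsto _).comp (h1 x)
  have hD : ∀ x, Tendsto (fun k => DD (F k) x) atTop (𝓝 (DD f x)) := fun x =>
    ((h0 x).inner tendsto_const_nhds).sub (tendsto_finsetSum _ fun i _ => he i i x)
  have hR : ∀ x, Tendsto (fun k => RR (F k) x) atTop (𝓝 (RR f x)) := fun x =>
    ((h0 x).norm.pow 2).add (tendsto_finsetSum _ fun i _ => tendsto_finsetSum _ fun j _ =>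
      (he i j x).pow 2)
  have hI : Tendsto (fun k => ∫ x, RR (F k) x ∂(gam n)) atTop (𝓝 (∫ x, RR f x ∂(gam n))) := by
    refine tendsto_integral_of_dominated_convergence B
      (fun k => (cont_RR (hF k)).aestronglyMeasurable) hB (fun k => ?_)
      (Eventually.of_forall hR)
    refine Eventually.of_forall fun x => ?_
    rw [Real.norm_of_nonneg (RR_nonneg _ _)]
    exact hRB k x
  unfold PP
  calc ∫⁻ x, ENNReal.ofReal (DD f x ^ 2) ∂(gam n)
      = ∫⁻ x, liminf (fun k => ENNReal.ofReal (DD (F k) x ^ 2)) atTop ∂(gam n) := by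
        refine lintegral_congr fun x => ?_
        exact ((ENNReal.tendsto_ofReal ((hD x).pow 2)).liminf_eq).symm
    _ ≤ liminf (fun k => ∫⁻ x, ENNReal.ofReal (DD (F k) x ^ 2) ∂(gam n)) atTop :=
        lintegral_liminf_le fun k => ((cont_DD (hF k)).pow 2).measurable.ennreal_ofReal
    _ ≤ liminf (fun k => ENNReal.ofReal (∫ x, RR (F k) x ∂(gam n))) atTop :=
        liminf_le_liminf (Eventually.of_forall hP)
    _ = _ := (ENNReal.tendsto_ofReal hI).liminf_eq

lemma abs_entry_le (L : EuclideanSpace ℝ (Fin n) →L[ℝ] EuclideanSpace ℝ (Fin n)) (i j : Fin n) :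
    (L (EuclideanSpace.single j (1 : ℝ)) i) ^ 2 ≤ ‖L‖ ^ 2 := by
  have h1 : ‖L (EuclideanSpace.single j (1 : ℝ)) i‖ ≤ ‖L (EuclideanSpace.single j (1 : ℝ))‖ :=
    PiLp.norm_apply_le _ _
  have h2 := L.le_opNorm (EuclideanSpace.single j (1 : ℝ))
  simp at h2
  rw [← sq_abs, ← Real.norm_eq_abs]
  gcongr
  exact h1.trans h2

lemma PP_cs {f : EuclideanSpace ℝ (Fin n) → EuclideanSpace ℝ (Fin n)} (hf : ContDiff ℝ 1 f)
    (cf : HasCompactSupport f) : PP f := by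
  let φ : ℕ → ContDiffBump (0 : EuclideanSpace ℝ (Fin n)) := fun k =>
    { rIn := 1 / ((k : ℝ) + 1) / 2, rOut := 1 / ((k : ℝ) + 1)
      rIn_pos := by positivity
      rIn_lt_rOut := half_lt_self (by positivity) }
  have hφ : Tendsto (fun k => (φ k).rOut) atTop (𝓝 0) := tendsto_one_div_add_atTop_nhds_zero_nat
  have hdf : Continuous (fderiv ℝ f) := hf.continuous_fderiv one_ne_zero
  have hφ0 : ∀ k, LocallyIntegrable ((φ k).normed volume) :=
    fun k => (φ k).continuous_normed.locallyIntegrable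
  have hder : ∀ k x, fderiv ℝ (convolution ((φ k).normed volume) f (ContinuousLinearMap.lsmul ℝ ℝ) volume) x =
      convolution ((φ k).normed volume) (fderiv ℝ f) (ContinuousLinearMap.lsmul ℝ ℝ) volume x := by
    intro k x
    rw [(cf.hasFDerivAt_convolution_right (ContinuousLinearMap.lsmul ℝ ℝ) (hφ0 k) hf x).fderiv]
    rfl
  have hsm : ∀ k, ContDiff ℝ 2 (convolution ((φ k).normed volume) f (ContinuousLinearMap.lsmul ℝ ℝ) volume) :=
    fun k => (φ k).hasCompactSupport_normed.contDiff_convolution_left (n := 2) _ (φ k).contDiff_normed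
      hf.continuous.locallyIntegrable
  obtain ⟨C, hC⟩ := hf.continuous.bounded_above_of_compact_support cf
  obtain ⟨C', hC'⟩ := hdf.bounded_above_of_compact_support (cf.fderiv ℝ)
  refine PP_lim (F := fun k => convolution ((φ k).normed volume) f (ContinuousLinearMap.lsmul ℝ ℝ) volume)
    (B := fun _ => C ^ 2 + ∑ i : Fin n, ∑ j : Fin n, C' ^ 2)
    (fun k => (hsm k).of_le (by norm_num)) (fun k => PP_smooth (hsm k) ?_) ?_ ?_
    (integrable_const _) ?_
  · exact (φ k).hasCompactSupport_normed.convolution _ cf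
  · exact fun x => ContDiffBump.convolution_tendsto_right_of_continuous hφ hf.continuous x
  · intro x
    simp only [hder]
    exact ContDiffBump.convolution_tendsto_right_of_continuous hφ hdf x
  · intro k x
    have b0 : ‖convolution ((φ k).normed volume) f (ContinuousLinearMap.lsmul ℝ ℝ) volume x‖ ≤ C := by
      rw [← dist_zero_right]
      refine dist_convolution_le ((norm_nonneg _).trans (hC 0)) (φ k).support_normed_eq.subset
        (φ k).nonneg_normed (φ k).integral_normed hf.continuous.aestronglyMeasurable fun y _ => ?_
      simpa using hC y
    have b1 : ‖convolution ((φ k).normed volume) (fderiv ℝ f) (ContinuousLinearMap.lsmul ℝ ℝ) volume x‖ ≤ C' := by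
      rw [← dist_zero_right]
      refine dist_convolution_le ((norm_nonneg _).trans (hC' 0)) (φ k).support_normed_eq.subset
        (φ k).nonneg_normed (φ k).integral_normed hdf.aestronglyMeasurable fun y _ => ?_
      simpa using hC' y
    unfold RR
    refine add_le_add (by gcongr) (Finset.sum_le_sum fun i _ => Finset.sum_le_sum fun j _ => ?_)
    rw [hder]
    refine (abs_entry_le _ i j).trans ?_
    gcongr

lemma PP_all {f : EuclideanSpace ℝ (Fin n) → EuclideanSpace ℝ (Fin n)} (hf : ContDiff ℝ 1 f)
    (hf2 : Integrable (fun x => ‖f x‖ ^ 2) (gam n))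
    (hJf2 : Integrable
      (fun x => ∑ i : Fin n, ∑ j : Fin n,
        (fderiv ℝ f x (EuclideanSpace.single j (1 : ℝ)) i) ^ 2) (gam n)) : PP f := by
  let φ : ContDiffBump (0 : EuclideanSpace ℝ (Fin n)) := ⟨1, 2, by norm_num, by norm_num⟩
  have hφ : ContDiff ℝ 1 φ := φ.contDiff
  let c : ℕ → ℝ := fun k => 1 / ((k : ℝ) + 1)
  have hc : Tendsto c atTop (𝓝 0) := tendsto_one_div_add_atTop_nhds_zero_nat
  have hc0 : ∀ k, 0 < c k := fun k => by positivity
  have hc1 : ∀ k, c k ≤ 1 := fun k => by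
    simp only [c]; rw [div_le_one (by positivity)]; linarith [Nat.cast_nonneg (α := ℝ) k]
  let χ : ℕ → EuclideanSpace ℝ (Fin n) → ℝ := fun k x => φ (c k • x)
  have hχ : ∀ k, ContDiff ℝ 1 (χ k) := fun k => hφ.comp (contDiff_const_smul _)
  have cχ : ∀ k, HasCompactSupport (χ k) := fun k =>
    φ.hasCompactSupport.comp_smul (hc0 k).ne'
  obtain ⟨C, hC⟩ := (hφ.continuous_fderiv one_ne_zero).bounded_above_of_compact_support
    (φ.hasCompactSupport.fderiv ℝ)
  have hC0 : 0 ≤ C := (norm_nonneg _).trans (hC 0)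
  have dχ : ∀ k x, fderiv ℝ (χ k) x = c k • fderiv ℝ φ (c k • x) := fun k x => by
    have := fderiv_comp_smul (f := φ) (c k) (x := x) (𝕜 := ℝ)
    exact this
  have dχ' : ∀ k x, ‖fderiv ℝ (χ k) x‖ ≤ c k * C := fun k x => by
    rw [dχ, norm_smul, Real.norm_of_nonneg (hc0 k).le]
    exact mul_le_mul_of_nonneg_left (hC _) (hc0 k).le
  have hd : ∀ k x, fderiv ℝ (fun y => χ k y • f y) x =
      χ k x • fderiv ℝ f x + (fderiv ℝ (χ k) x).smulRight (f x) := fun k x =>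
    fderiv_fun_smul ((hχ k).differentiable one_ne_zero x) (hf.differentiable one_ne_zero x)
  have χ0 : ∀ k x, 0 ≤ χ k x := fun k x => φ.nonneg
  have χ1 : ∀ k x, χ k x ≤ 1 := fun k x => φ.le_one
  have χt : ∀ x, Tendsto (fun k => χ k x) atTop (𝓝 1) := by
    intro x
    have h1 : Tendsto (fun k => c k • x) atTop (𝓝 0) := by
      simpa using hc.smul_const x
    have h2 : φ 0 = 1 := φ.one_of_mem_closedBall (by simp [φ])
    have h3 := (hφ.continuous.tendsto 0).comp h1
    rw [h2] at h3
    exact h3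
  refine PP_lim (F := fun k x => χ k x • f x)
    (B := fun x => ‖f x‖ ^ 2 + (2 * (∑ i : Fin n, ∑ j : Fin n,
        (fderiv ℝ f x (EuclideanSpace.single j (1 : ℝ)) i) ^ 2) +
        (∑ i : Fin n, ∑ j : Fin n, 2 * C ^ 2 * ‖f x‖ ^ 2)))
    (fun k => (hχ k).smul hf) (fun k => PP_cs ((hχ k).smul hf) (cχ k).smul_right) ?_ ?_ ?_ ?_
  · intro x
    simpa using (χt x).smul_const (f x)
  · intro x
    simp only [hd]
    have t0 : Tendsto (fun k => (fderiv ℝ (χ k) x).smulRight (f x)) atTop (𝓝 0) := by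
      refine squeeze_zero_norm (a := fun k => c k * C * ‖f x‖) (fun k => ?_) ?_
      · rw [ContinuousLinearMap.norm_smulRight_apply]
        exact mul_le_mul_of_nonneg_right (dχ' k x) (norm_nonneg _)
      · simpa using (hc.mul_const C).mul_const ‖f x‖
    simpa using ((χt x).smul_const (fderiv ℝ f x)).add t0
  · exact hf2.add ((hJf2.const_mul 2).add (integrable_finsetSum _ fun i _ =>
      integrable_finsetSum _ fun j _ => hf2.const_mul _))
  · intro k x
    simp only [RR]
    gcongr ?_ + ?_
    · rw [norm_smul, Real.norm_of_nonneg (χ0 k x)]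
      exact pow_le_pow_left₀ (mul_nonneg (χ0 k x) (norm_nonneg (f x)))
        (mul_le_of_le_one_left (norm_nonneg (f x)) (χ1 k x)) 2
    · simp only [Finset.mul_sum, ← Finset.sum_add_distrib]
      refine Finset.sum_le_sum fun i _ => Finset.sum_le_sum fun j _ => ?_
      rw [hd]
      set a := fderiv ℝ f x (EuclideanSpace.single j (1 : ℝ)) i
      have hb : ((fderiv ℝ (χ k) x).smulRight (f x) (EuclideanSpace.single j (1 : ℝ)) i) ^ 2 ≤
          C ^ 2 * ‖f x‖ ^ 2 := by
        refine (abs_entry_le _ i j).trans ?_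
        rw [ContinuousLinearMap.norm_smulRight_apply, ← mul_pow]
        gcongr
        exact (dχ' k x).trans (mul_le_of_le_one_left hC0 (hc1 k))
      have hs : (χ k x * a) ^ 2 ≤ a ^ 2 := by
        rw [mul_pow]
        exact mul_le_of_le_one_left (sq_nonneg a) (pow_le_one₀ (χ0 k x) (χ1 k x))
      set b := (fderiv ℝ (χ k) x).smulRight (f x) (EuclideanSpace.single j (1 : ℝ)) i
      have : (χ k x • fderiv ℝ f x + (fderiv ℝ (χ k) x).smulRight (f x))
        (EuclideanSpace.single j (1 : ℝ)) i = χ k x * a + b := rfl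
      rw [this]
      nlinarith [sq_nonneg (χ k x * a - b)]

end Ramer

/-- Ramer's lemma. Let `μ` be the standard Gaussian measure on `ℝⁿ` and
`f : ℝⁿ → ℝⁿ` a `C¹` map such that `x ↦ |f x|²` and `x ↦ ‖Jf(x)‖₂²` (squared Hilbert–Schmidt
norm of the Jacobian) are `μ`-integrable. Then
`∫ (f(x)·x − Tr Jf(x))² dμ ≤ ∫ (|f(x)|² + ‖Jf(x)‖₂²) dμ`. -/
theorem statement0 (n : ℕ)
    (μ : Measure (EuclideanSpace ℝ (Fin n)))
    (hμ : μ = volume.withDensity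
      (fun x => ENNReal.ofReal ((2 * π) ^ (-(n : ℝ) / 2) * Real.exp (-‖x‖ ^ 2 / 2))))
    (f : EuclideanSpace ℝ (Fin n) → EuclideanSpace ℝ (Fin n))
    (hf : ContDiff ℝ 1 f)
    (hf2 : Integrable (fun x => ‖f x‖ ^ 2) μ)
    (hJf2 : Integrable
      (fun x => ∑ i : Fin n, ∑ j : Fin n,
        (fderiv ℝ f x (EuclideanSpace.single j (1 : ℝ)) i) ^ 2) μ) :
    ∫ x, (⟪f x, x⟫ - ∑ i : Fin n, fderiv ℝ f x (EuclideanSpace.single i (1 : ℝ)) i) ^ 2 ∂μ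
      ≤ ∫ x, (‖f x‖ ^ 2 + ∑ i : Fin n, ∑ j : Fin n,
          (fderiv ℝ f x (EuclideanSpace.single j (1 : ℝ)) i) ^ 2) ∂μ := by
  have hμ' : μ = Ramer.gam n := hμ
  clear hμ
  subst hμ'
  have h : Ramer.PP f := Ramer.PP_all hf hf2 hJf2
  change ∫ x, Ramer.DD f x ^ 2 ∂(Ramer.gam n) ≤ ∫ x, Ramer.RR f x ∂(Ramer.gam n)
  rw [integral_eq_lintegral_of_nonneg_ae (Eventually.of_forall fun x => sq_nonneg _)
    ((Ramer.cont_DD hf).pow 2).aestronglyMeasurable]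
  exact ENNReal.toReal_le_of_le_ofReal (integral_nonneg fun x => Ramer.RR_nonneg f x) h
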